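/- arXiv:1806.07107 — 2 statements merged into one kernel-verified Lean document; each statement's English description precedes it below -/
import Mathlib

section
/- Let R be an integral domain and let f be a nonzero Laurent polynomial over R in two variables. If f has a line polynomial factor in direction u ∈ ℤ²∖{0}, then supp(f) has outer edges perpendicular both to v and to −v, where v ∈ ℤ²∖{0} is a vector perpendicular to u. -/
/-- Laurent polynomials over `R` in two variables: finitely supported functions
`ℤ² → R`, multiplied by convolution. -/
abbrev LP (R : Type*) [CommRing R] := AddMonoidAlgebra R (ℤ × ℤ)

/-- `f` annihilates the configuration `c` if the formal product of `f` with the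
power series of `c` is the zero power series. -/
def Annihilates {R : Type*} [CommRing R] (f : LP R) (c : ℤ × ℤ → R) : Prop :=
  ∀ n : ℤ × ℤ, ∑ m ∈ f.coeff.support, f.coeff m * c (n - m) = 0

/-- The set of `D`-patterns of `c`. -/
def Patterns {R : Type*} (c : ℤ × ℤ → R) (D : Finset (ℤ × ℤ)) : Set (D → R) :=
  Set.range fun t : ℤ × ℤ => fun d : D => c (t + d.1)

/-- `c` has low complexity with respect to some finite nonempty shape. -/
def LowComplexity {R : Type*} (c : ℤ × ℤ → R) : Prop :=
  ∃ D : Finset (ℤ × ℤ), D.Nonempty ∧ (Patterns c D).ncard ≤ D.card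

/-- `t` is a period vector of `c`. -/
def IsPeriodVector {R : Type*} (c : ℤ × ℤ → R) (t : ℤ × ℤ) : Prop :=
  t ≠ 0 ∧ ∀ n : ℤ × ℤ, c (n + t) = c n

/-- `c` is periodic. -/
def Periodic {R : Type*} (c : ℤ × ℤ → R) : Prop :=
  ∃ t : ℤ × ℤ, IsPeriodVector c t

/-- `c` is two-periodic: it has two linearly independent period vectors. -/
def TwoPeriodic {R : Type*} (c : ℤ × ℤ → R) : Prop :=
  ∃ t₁ t₂ : ℤ × ℤ, IsPeriodVector c t₁ ∧ IsPeriodVector c t₂ ∧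
    t₁.1 * t₂.2 - t₁.2 * t₂.1 ≠ 0

/-- `f` is a line polynomial in direction `u`: its support has at least two elements
and lies on a line `{n + r • u : r ∈ ℚ}`. -/
def IsLinePoly {R : Type*} [CommRing R] (u : ℤ × ℤ) (f : LP R) : Prop :=
  1 < f.coeff.support.card ∧ ∃ n : ℤ × ℤ, ∀ m ∈ f.coeff.support, ∃ r : ℚ,
    (m.1 : ℚ) = n.1 + r * u.1 ∧ (m.2 : ℚ) = n.2 + r * u.2

/-- A finite set `D ⊆ ℤ²` has an outer edge perpendicular to `v`. -/
def HasOuterEdge (D : Finset (ℤ × ℤ)) (v : ℤ × ℤ) : Prop :=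
  ∃ x ∈ D, (∀ y ∈ D, 0 ≤ (y.1 - x.1) * v.1 + (y.2 - x.2) * v.2) ∧
    ∃ y₁ ∈ D, ∃ y₂ ∈ D, y₁ ≠ y₂ ∧
      (y₁.1 - x.1) * v.1 + (y₁.2 - x.2) * v.2 = 0 ∧
      (y₂.1 - x.1) * v.1 + (y₂.2 - x.2) * v.2 = 0

/-!
For a linear functional `φ` and `f = g * h`, let `A` and `B` be the faces of `supp(g)` and `supp(h)`
on which `φ` is minimal. Two points `x ∈ supp(g)`, `y ∈ supp(h)` with `x + y ∈ A + B` must satisfy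
`x ∈ A` and `y ∈ B`, so a sum with a unique decomposition in `A + B` also has a unique
decomposition in `supp(g) + supp(h)`. Over a ring without zero divisors such a sum cannot cancel:
it lies in `supp(f)`, on the face where `φ` is minimal. As `ℤ²` is torsion free, `A + B` contains
two such sums as soon as `A` has two points and `B` one. A line polynomial in direction `u` is
constant in the directions `±v` perpendicular to `u`, so there `A` is all of `supp(g)`.
-/

section MinFace

variable {α β : Type*} [LinearOrder β]

/-- The face of a finite set `D` exposed by `φ`: the points of `D` at which `φ` attains its minimum
over `D`. It is a subset of `D` itself, not of the convex hull of `D`. -/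
def minFace (φ : α → β) (D : Finset α) : Finset α :=
  {x ∈ D | ∀ y ∈ D, φ x ≤ φ y}

lemma mem_minFace {φ : α → β} {D : Finset α} {x : α} :
    x ∈ minFace φ D ↔ x ∈ D ∧ ∀ y ∈ D, φ x ≤ φ y :=
  Finset.mem_filter

lemma minFace_nonempty {φ : α → β} {D : Finset α} (hD : D.Nonempty) : (minFace φ D).Nonempty := by
  obtain ⟨x, hx, hmin⟩ := D.exists_min_image φ hD
  exact ⟨x, mem_minFace.mpr ⟨hx, hmin⟩⟩

lemma minFace_eq_self {φ : α → β} {D : Finset α} (hφ : ∀ x ∈ D, ∀ y ∈ D, φ x = φ y) :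
    minFace φ D = D :=
  Finset.filter_true_of_mem fun x hx y hy ↦ (hφ x hx y hy).le

end MinFace

section SupportMul

variable {M β F : Type*} [Add M] [AddCommMonoid β] [LinearOrder β] [IsOrderedCancelAddMonoid β]
  [FunLike F M β] [AddHomClass F M β] {φ : F} {A B : Finset M} {a b : M}

lemma uniqueAdd_of_uniqueAdd_minFace (ha : a ∈ minFace φ A) (hb : b ∈ minFace φ B)
    (h : UniqueAdd (minFace φ A) (minFace φ B) a b) : UniqueAdd A B a b := by
  intro x y hx hy hxy
  obtain ⟨-, ha_min⟩ := mem_minFace.mp ha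
  obtain ⟨-, hb_min⟩ := mem_minFace.mp hb
  have hφ : φ a + φ b = φ x + φ y := by rw [← map_add, ← map_add, hxy]
  obtain ⟨hax, hby⟩ := (add_eq_add_iff_eq_and_eq (ha_min x hx) (hb_min y hy)).mp hφ
  exact h (mem_minFace.mpr ⟨hx, hax ▸ ha_min⟩) (mem_minFace.mpr ⟨hy, hby ▸ hb_min⟩) hxy

variable {R : Type*} [Semiring R] [NoZeroDivisors R] {g h : AddMonoidAlgebra R M}

lemma add_mem_minFace_support_mul
    (ha : a ∈ minFace φ g.coeff.support) (hb : b ∈ minFace φ h.coeff.support)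
    (hab : UniqueAdd (minFace φ g.coeff.support) (minFace φ h.coeff.support) a b) :
    a + b ∈ minFace φ (g * h).coeff.support := by
  classical
  obtain ⟨ha_supp, ha_min⟩ := mem_minFace.mp ha
  obtain ⟨hb_supp, hb_min⟩ := mem_minFace.mp hb
  refine mem_minFace.mpr ⟨?_, fun z hz ↦ ?_⟩
  · rw [Finsupp.mem_support_iff] at ha_supp hb_supp ⊢
    rw [AddMonoidAlgebra.coeff_mul_add_of_uniqueAdd (uniqueAdd_of_uniqueAdd_minFace ha hb hab)]
    exact mul_ne_zero ha_supp hb_supp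
  · obtain ⟨x, hx, y, hy, rfl⟩ :=
      Finset.mem_add.mp (AddMonoidAlgebra.support_coeff_mul_subset g h hz)
    rw [map_add, map_add]
    exact add_le_add (ha_min x hx) (hb_min y hy)

lemma minFace_support_mul_nontrivial [TwoUniqueSums M]
    (hg : (minFace φ g.coeff.support).Nontrivial) (hh : h ≠ 0) :
    (minFace φ (g * h).coeff.support).Nontrivial := by
  have hh_face : (minFace φ h.coeff.support).Nonempty :=
    minFace_nonempty (Finsupp.support_nonempty_iff.mpr (AddMonoidAlgebra.coeff_eq_zero.not.mpr hh))
  have hcard : 1 < (minFace φ g.coeff.support).card * (minFace φ h.coeff.support).card :=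
    one_lt_mul_of_lt_of_le (Finset.one_lt_card_iff_nontrivial.mpr hg) hh_face.card_pos
  obtain ⟨⟨a, b⟩, hab, ⟨a', b'⟩, hab', hne, huniq, huniq'⟩ :=
    TwoUniqueSums.uniqueAdd_of_one_lt_card hcard
  obtain ⟨ha, hb⟩ := Finset.mem_product.mp hab
  obtain ⟨ha', hb'⟩ := Finset.mem_product.mp hab'
  refine ⟨a + b, add_mem_minFace_support_mul ha hb huniq,
    a' + b', add_mem_minFace_support_mul ha' hb' huniq', fun heq ↦ hne ?_⟩
  exact Prod.ext_iff.mpr (huniq' ha hb heq)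

end SupportMul

/-- The functional `x ↦ v · x` on `ℤ²`, bundled as an additive homomorphism. -/
def dotHom (v : ℤ × ℤ) : ℤ × ℤ →+ ℤ :=
  (AddMonoidHom.mulLeft v.1).coprod (AddMonoidHom.mulLeft v.2)

lemma dotHom_apply (v x : ℤ × ℤ) : dotHom v x = v.1 * x.1 + v.2 * x.2 := rfl

lemma dotHom_neg (v x : ℤ × ℤ) : dotHom (-v) x = -dotHom v x := by
  simp only [dotHom_apply, Prod.fst_neg, Prod.snd_neg]
  ring

lemma hasOuterEdge_of_nontrivial_minFace {D : Finset (ℤ × ℤ)} {v : ℤ × ℤ}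
    (h : (minFace (dotHom v) D).Nontrivial) : HasOuterEdge D v := by
  have dot_sub (x y : ℤ × ℤ) :
      (y.1 - x.1) * v.1 + (y.2 - x.2) * v.2 = dotHom v y - dotHom v x := by
    simp only [dotHom_apply]
    ring
  obtain ⟨x, hx, y, hy, hxy⟩ := h
  obtain ⟨hxD, hx_min⟩ := mem_minFace.mp hx
  obtain ⟨hyD, hy_min⟩ := mem_minFace.mp hy
  simp only [HasOuterEdge, dot_sub, sub_nonneg, sub_eq_zero]
  exact ⟨x, hxD, hx_min, x, hxD, y, hyD, hxy, rfl, (hy_min x hxD).antisymm (hx_min y hyD)⟩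

section LinePoly

variable {R : Type*} [CommRing R] {u v : ℤ × ℤ} {g : LP R}

lemma IsLinePoly.dotHom_eq (hg : IsLinePoly u g) (hvu : dotHom v u = 0) :
    ∀ x ∈ g.coeff.support, ∀ y ∈ g.coeff.support, dotHom v x = dotHom v y := by
  obtain ⟨-, n, hn⟩ := hg
  have dotHom_eq_base : ∀ x ∈ g.coeff.support, dotHom v x = dotHom v n := by
    intro x hx
    obtain ⟨r, hr₁, hr₂⟩ := hn x hx
    have hvu' : (v.1 : ℚ) * u.1 + v.2 * u.2 = 0 := mod_cast hvu
    have : (v.1 : ℚ) * x.1 + v.2 * x.2 = v.1 * n.1 + v.2 * n.2 := by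
      rw [hr₁, hr₂]
      linear_combination r * hvu'
    exact mod_cast this
  exact fun x hx y hy ↦ (dotHom_eq_base x hx).trans (dotHom_eq_base y hy).symm

lemma IsLinePoly.minFace_nontrivial (hg : IsLinePoly u g) (hvu : dotHom v u = 0) :
    (minFace (dotHom v) g.coeff.support).Nontrivial := by
  rw [minFace_eq_self (hg.dotHom_eq hvu)]
  exact Finset.one_lt_card_iff_nontrivial.mp hg.1

end LinePoly

/-- a line polynomial factor in direction u forces outer edges
perpendicular to v and −v, for v perpendicular to u. -/
theorem outer_edges_of_line_factor {R : Type*} [CommRing R] [IsDomain R] (f : LP R)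
    (hf : f ≠ 0) (u : ℤ × ℤ) (hu : u ≠ 0) (g : LP R) (hg : IsLinePoly u g)
    (hdvd : g ∣ f) (v : ℤ × ℤ) (hv : v ≠ 0) (hperp : v.1 * u.1 + v.2 * u.2 = 0) :
    HasOuterEdge f.coeff.support v ∧ HasOuterEdge f.coeff.support (-v) := by
  obtain ⟨h, rfl⟩ := hdvd
  have hh : h ≠ 0 := right_ne_zero_of_mul hf
  have outer_edge (w : ℤ × ℤ) (hw : dotHom w u = 0) : HasOuterEdge (g * h).coeff.support w :=
    hasOuterEdge_of_nontrivial_minFace <|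
      minFace_support_mul_nontrivial (hg.minFace_nontrivial hw) hh
  have hperp_neg : dotHom (-v) u = 0 := (dotHom_neg v u).trans (neg_eq_zero.mpr hperp)
  exact ⟨outer_edge v hperp, outer_edge (-v) hperp_neg⟩
end

section
/- Let p be a prime, let f be a Laurent polynomial over F_p in two variables with no line polynomial factors, and let c : ℤ² → F_p be annihilated by f. Let c' : ℤ² → ℤ be obtained from c by the renaming a ↦ a for a ∈ {0,…,p−1}. If some nonzero Laurent polynomial over ℤ annihilates c', then c is two-periodic. -/
/-!
Reducing modulo a prime `q` and taking `q`-th powers turns an integral annihilator `f'` into its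
dilation `f'(x^q)` modulo `q`. For bounded configurations and large `q`, vanishing modulo `q` is
vanishing, so all dilations `f'(x^k)` with `k` free of small prime factors annihilate. For a
suitable `r` this covers every `k ≡ 1` modulo `r`, and eliminating all monomials of `f'` but one
from these dilations leaves an annihilator `∏ (x^u - 1)` with all `u ≠ 0`.

Over a finite field `K`, the polynomial `x^u - 1` is a product of `q(x^v)` with `v` primitive and
`q` irreducible. If `f` has no line factors, it is not divisible by `q(x^v)` unless this is a unit,
so modulo `f` and `q(x^v)` every monomial is algebraic over a finite field, hence a root of unity.
In positive characteristic this property passes to the product `∏ (x^u - 1)`, and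
`x^(N w) - 1` annihilates the configuration for all `w`.
-/

open AddMonoidAlgebra

section Convolution

variable {R S G : Type*} [CommRing R] [CommRing S] [AddCommGroup G]

/-- The translations `c ↦ c (· - m)` of configurations on a group, as a representation of the group;
`Multiplicative` is there to match `AddMonoidAlgebra.lift`. -/
def translation (R G : Type*) [CommRing R] [AddCommGroup G] :
    Multiplicative G →* Module.End R (G → R) where
  toFun m := LinearMap.funLeft R R fun n => n - m.toAdd
  map_one' := by ext1 c; funext n; simp [LinearMap.funLeft_apply]
  map_mul' a b := LinearMap.ext fun c => funext fun n => by
    simp [LinearMap.funLeft_apply, Module.End.mul_apply, sub_sub]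

/-- The formal product of a (generalized) Laurent polynomial with a configuration, as an algebra
action. -/
noncomputable def convolution (R G : Type*) [CommRing R] [AddCommGroup G] :
    R[G] →ₐ[R] Module.End R (G → R) :=
  AddMonoidAlgebra.lift R _ G (translation R G)

theorem convolution_single (m : G) (a : R) (c : G → R) (n : G) :
    convolution R G (single m a) c n = a * c (n - m) := by
  simp [convolution, translation, LinearMap.funLeft_apply]

theorem convolution_apply (f : R[G]) (c : G → R) (n : G) :
    convolution R G f c n = ∑ m ∈ f.coeff.support, f.coeff m * c (n - m) := by
  simp [convolution, AddMonoidAlgebra.lift_apply, Finsupp.sum, translation,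
    LinearMap.funLeft_apply, LinearMap.sum_apply]

theorem convolution_mapRingHom (φ : R →+* S) (f : R[G]) (c : G → R) (n : G) :
    convolution S G (mapRingHom G φ f) (fun m => φ (c m)) n = φ (convolution R G f c n) := by
  induction f using AddMonoidAlgebra.induction_linear with
  | zero => simp
  | add f g hf hg => simp [map_add, LinearMap.add_apply, hf, hg]
  | single m a => simp [convolution_single]

/-- The ideal of all Laurent polynomials annihilating a configuration. -/
noncomputable def annihilatorIdeal (c : G → R) : Ideal R[G] :=
  (Ideal.torsionOf (Module.End R (G → R)) (G → R) c).comap (convolution R G)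

theorem mem_annihilatorIdeal {f : R[G]} {c : G → R} :
    f ∈ annihilatorIdeal c ↔ convolution R G f c = 0 := Iff.rfl

theorem annihilates_iff_mem_annihilatorIdeal {f : LP R} {c : ℤ × ℤ → R} :
    Annihilates f c ↔ f ∈ annihilatorIdeal c := by
  simp only [mem_annihilatorIdeal, funext_iff, convolution_apply, Annihilates, Pi.zero_apply]

theorem mapRingHom_mem_annihilatorIdeal (φ : R →+* S) {f : R[G]} {c : G → R}
    (hf : f ∈ annihilatorIdeal c) :
    mapRingHom G φ f ∈ annihilatorIdeal fun n => φ (c n) := by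
  refine mem_annihilatorIdeal.2 (funext fun n => ?_)
  rw [convolution_mapRingHom, mem_annihilatorIdeal.1 hf, Pi.zero_apply, map_zero, Pi.zero_apply]

theorem mem_annihilatorIdeal_of_mul_single_mem [NoZeroDivisors R] {g : R[G]} {m : G} {a : R}
    {c : G → R} (ha : a ≠ 0) (h : g * single m a ∈ annihilatorIdeal c) :
    g ∈ annihilatorIdeal c := by
  refine mem_annihilatorIdeal.2 (funext fun n => ?_)
  have hn := congrFun (mem_annihilatorIdeal.1 h) (n + m)
  rw [mul_comm, map_mul, Module.End.mul_apply, convolution_single, add_sub_cancel_right] at hn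
  exact (mul_eq_zero.1 hn).resolve_left ha

end Convolution

section Dilation

variable {R S G : Type*} [CommRing R] [CommRing S] [AddCommGroup G]

/-- The substitution `f(x) ↦ f(x^k)`, multiplying all exponents by `k`. -/
noncomputable def dilate (k : ℕ) : R[G] →+* R[G] :=
  mapDomainRingHom R (nsmulAddMonoidHom k)

theorem dilate_single (k : ℕ) (m : G) (a : R) : dilate k (single m a) = single (k • m) a := by
  simp [dilate]

theorem dilate_eq_sum (k : ℕ) (f : R[G]) :
    dilate k f = ∑ m ∈ f.coeff.support, single (k • m) (f.coeff m) := by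
  conv_lhs => rw [← AddMonoidAlgebra.sum_coeff_single f, Finsupp.sum, map_sum]
  simp only [dilate_single]

theorem dilate_one (f : R[G]) : dilate 1 f = f := by
  induction f using AddMonoidAlgebra.induction_linear with
  | zero => simp
  | add f g hf hg => rw [map_add, hf, hg]
  | single m a => rw [dilate_single, one_smul]

theorem dilate_dilate (k l : ℕ) (f : R[G]) : dilate k (dilate l f) = dilate (k * l) f := by
  induction f using AddMonoidAlgebra.induction_linear with
  | zero => simp
  | add f g hf hg => simp only [map_add, hf, hg]
  | single m a => simp only [dilate_single, mul_smul]

theorem dilate_mapRingHom (φ : R →+* S) (k : ℕ) (f : R[G]) :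
    dilate k (mapRingHom G φ f) = mapRingHom G φ (dilate k f) := by
  induction f using AddMonoidAlgebra.induction_linear with
  | zero => simp
  | add f g hf hg => simp only [map_add, hf, hg]
  | single m a => simp only [dilate_single, mapRingHom_single]

theorem charP_addMonoidAlgebra (R G : Type*) [CommRing R] [AddCommGroup G] (p : ℕ) [CharP R p] :
    CharP R[G] p :=
  charP_of_injective_algebraMap (FaithfulSMul.algebraMap_injective R R[G]) p

theorem dilate_zmod (q : ℕ) [Fact q.Prime] (f : (ZMod q)[G]) : dilate q f = f ^ q := by
  have := charP_addMonoidAlgebra (ZMod q) G q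
  induction f using AddMonoidAlgebra.induction_linear with
  | zero => simp [(Fact.out : q.Prime).ne_zero]
  | add f g hf hg => rw [add_pow_char, map_add, hf, hg]
  | single m a => simp [dilate_single, single_pow]

end Dilation

section IntegerConfiguration

variable {G : Type*} [AddCommGroup G] {f : ℤ[G]} {c : G → ℤ} {B : ℤ}

theorem abs_convolution_dilate_le (hB : ∀ n, |c n| ≤ B) (k : ℕ) (n : G) :
    |convolution ℤ G (dilate k f) c n| ≤ (∑ m ∈ f.coeff.support, |f.coeff m|) * B := by
  rw [dilate_eq_sum, map_sum, LinearMap.sum_apply, Finset.sum_apply, Finset.sum_mul]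
  refine (Finset.abs_sum_le_sum_abs _ _).trans (Finset.sum_le_sum fun m _ => ?_)
  rw [convolution_single, abs_mul]
  exact mul_le_mul_of_nonneg_left (hB _) (abs_nonneg _)

theorem prime_dvd_convolution_dilate (hf : f ∈ annihilatorIdeal c) {q : ℕ} (hq : q.Prime) (n : G) :
    (q : ℤ) ∣ convolution ℤ G (dilate q f) c n := by
  have : Fact q.Prime := ⟨hq⟩
  have hpow : mapRingHom G (Int.castRingHom (ZMod q)) f ^ q ∈
      annihilatorIdeal fun n => Int.castRingHom (ZMod q) (c n) :=
    Ideal.pow_mem_of_mem _ (mapRingHom_mem_annihilatorIdeal _ hf) q hq.pos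
  rw [← dilate_zmod, dilate_mapRingHom, mem_annihilatorIdeal] at hpow
  have hn := congrFun hpow n
  rw [convolution_mapRingHom] at hn
  exact (ZMod.intCast_zmod_eq_zero_iff_dvd _ _).1 hn

theorem dilate_mem_annihilatorIdeal (hf : f ∈ annihilatorIdeal c) (hB : ∀ n, |c n| ≤ B) {k : ℕ}
    (hk : k ≠ 0)
    (hlarge : ∀ q : ℕ, q.Prime → q ∣ k → (∑ m ∈ f.coeff.support, |f.coeff m|) * B < q) :
    dilate k f ∈ annihilatorIdeal c := by
  induction k using induction_on_primes with
  | zero => exact absurd rfl hk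
  | one => rwa [dilate_one]
  | prime_mul q k hq ih =>
    have hdil := ih (right_ne_zero_of_mul hk) fun l hl hlk => hlarge l hl (hlk.mul_left q)
    refine mem_annihilatorIdeal.2 (funext fun n => ?_)
    have hdvd := prime_dvd_convolution_dilate hdil hq n
    rw [dilate_dilate] at hdvd
    exact Int.eq_zero_of_abs_lt_dvd hdvd
      ((abs_convolution_dilate_le hB _ n).trans_lt (hlarge q hq (dvd_mul_right q k)))

theorem exists_forall_dilate_mem_annihilatorIdeal (hf : f ∈ annihilatorIdeal c)
    (hB : ∀ n, |c n| ≤ B) :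
    ∃ r : ℕ, r ≠ 0 ∧ ∀ j : ℕ, dilate (1 + r * j) f ∈ annihilatorIdeal c := by
  set C := ((∑ m ∈ f.coeff.support, |f.coeff m|) * B).toNat
  refine ⟨C.factorial, C.factorial_ne_zero, fun j =>
    dilate_mem_annihilatorIdeal hf hB (by omega) fun q hq hqdvd => ?_⟩
  have hCq : C < q := by
    by_contra! hqC
    have hq_one : q ∣ 1 := (Nat.dvd_add_left ((hq.dvd_factorial.2 hqC).mul_right j)).1 hqdvd
    exact hq.one_lt.ne' (Nat.dvd_one.1 hq_one)
  omega

end IntegerConfiguration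

section Elimination

variable {R G : Type*} [CommRing R] [AddCommGroup G] {I : Ideal R[G]} {f : R[G]} {r : ℕ}

theorem sum_eval_mul_single_mem (h : ∀ j : ℕ, dilate (1 + r * j) f ∈ I) (P : Polynomial R[G]) :
    ∑ m ∈ f.coeff.support, P.eval (single (r • m) 1) * single m (f.coeff m) ∈ I := by
  induction P using Polynomial.induction_on' with
  | add P Q hP hQ =>
    simp only [Polynomial.eval_add, add_mul, Finset.sum_add_distrib]
    exact add_mem hP hQ
  | monomial j a =>
    suffices a * dilate (1 + r * j) f = ∑ m ∈ f.coeff.support,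
        (Polynomial.monomial j a).eval (single (r • m) 1) * single m (f.coeff m) from
      this ▸ I.mul_mem_left a (h j)
    rw [dilate_eq_sum, Finset.mul_sum]
    refine Finset.sum_congr rfl fun m _ => ?_
    rw [Polynomial.eval_monomial, mul_assoc, single_pow, single_mul_single, one_pow, one_mul,
      add_smul, one_smul, mul_comm r j, mul_smul, add_comm]

theorem prod_single_sub_one_mul_single_mem [DecidableEq G]
    (h : ∀ j : ℕ, dilate (1 + r * j) f ∈ I) {m₀ : G} (hm₀ : m₀ ∈ f.coeff.support) :
    (∏ m ∈ f.coeff.support.erase m₀, (single (r • (m₀ - m)) 1 - 1)) *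
      single m₀ (f.coeff m₀) ∈ I := by
  -- `P` vanishes at `x^(r m)` for all `m ≠ m₀` in the support of `f`.
  let P : Polynomial R[G] := ∏ m ∈ f.coeff.support.erase m₀,
    (Polynomial.C (single (-(r • m)) 1) * Polynomial.X - 1)
  have eval_P (n : G) : P.eval (single (r • n) 1) =
      ∏ m ∈ f.coeff.support.erase m₀, (single (r • (n - m)) 1 - 1) := by
    simp only [P, Polynomial.eval_prod, Polynomial.eval_sub, Polynomial.eval_mul,
      Polynomial.eval_C, Polynomial.eval_X, Polynomial.eval_one, single_mul_single, mul_one,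
      neg_add_eq_sub, ← smul_sub]
  have hsum := sum_eval_mul_single_mem h P
  rw [Finset.sum_eq_single_of_mem m₀ hm₀ fun m hm hne => ?_, eval_P] at hsum
  · exact hsum
  · rw [eval_P, Finset.prod_eq_zero (Finset.mem_erase.2 ⟨hne, hm⟩) (by simp [one_def]), zero_mul]

end Elimination

theorem exists_prod_single_sub_one_mem_annihilatorIdeal {G : Type*} [AddCommGroup G]
    [IsAddTorsionFree G] {f : ℤ[G]} (hf₀ : f ≠ 0) {c : G → ℤ} (hf : f ∈ annihilatorIdeal c)
    {B : ℤ} (hB : ∀ n, |c n| ≤ B) :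
    ∃ s : Finset G, 0 ∉ s ∧ ∏ u ∈ s, (single u 1 - 1) ∈ annihilatorIdeal c := by
  classical
  obtain ⟨r, hr, hdil⟩ := exists_forall_dilate_mem_annihilatorIdeal hf hB
  obtain ⟨m₀, hm₀⟩ : f.coeff.support.Nonempty := by simpa using hf₀
  have hinj : Function.Injective fun m => r • (m₀ - m) :=
    (nsmul_right_injective hr).comp sub_right_injective
  refine ⟨(f.coeff.support.erase m₀).map ⟨_, hinj⟩, ?_, ?_⟩
  · simp [hr, sub_eq_zero]
  · rw [Finset.prod_map]
    exact mem_annihilatorIdeal_of_mul_single_mem (Finsupp.mem_support_iff.1 hm₀)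
      (prod_single_sub_one_mul_single_mem hdil hm₀)

section FiniteOrder

variable {A : Type*} [CommRing A]

theorem isOfFinOrder_of_isUnit_of_isAlgebraic (K : Type*) [Field K] [Finite K] [Algebra K A]
    {a : A} (hunit : IsUnit a) (halg : IsAlgebraic K a) : IsOfFinOrder a := by
  obtain ⟨u, rfl⟩ := hunit
  have : Module.Finite K (Algebra.adjoin K {(u : A)}) :=
    .of_fg (isAlgebraic_iff_isIntegral.1 halg).fg_adjoin_singleton
  have : Finite (Algebra.adjoin K {(u : A)}) := Module.finite_of_finite K
  rw [Units.isOfFinOrder_val]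
  by_contra hinf
  let power (n : ℕ) : Algebra.adjoin K {(u : A)} := ⟨u, Algebra.self_mem_adjoin_singleton K _⟩ ^ n
  refine not_injective_infinite_finite power fun i j hij =>
    injective_pow_iff_not_isOfFinOrder.2 hinf (Units.ext ?_)
  simpa [power] using congrArg Subtype.val hij

theorem aevalAeval_eq_eval₂ {R : Type*} [CommRing R] [Algebra R A] (a b : A)
    (F : Polynomial (Polynomial R)) :
    Polynomial.aevalAeval a b F = F.eval₂ (Polynomial.aeval a : Polynomial R →ₐ[R] A) b := by
  induction F using Polynomial.induction_on' with
  | add F G hF hG => rw [map_add, Polynomial.eval₂_add, hF, hG]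
  | monomial j P => simp

theorem aevalAeval_algHom_apply {R B : Type*} [CommRing R] [Algebra R A] [CommRing B] [Algebra R B]
    (φ : A →ₐ[R] B) (a b : A) (F : Polynomial (Polynomial R)) :
    Polynomial.aevalAeval (φ a) (φ b) F = φ (Polynomial.aevalAeval a b F) := by
  induction F using Polynomial.induction_on' with
  | add F G hF hG => simp only [map_add, hF, hG]
  | monomial j P => simp [Polynomial.aeval_algHom_apply]

theorem map_adjoinRoot_mk_eq_zero_iff {R : Type*} [CommRing R] {q : Polynomial R}
    {F : Polynomial (Polynomial R)} :
    F.map (AdjoinRoot.mk q) = 0 ↔ Polynomial.C q ∣ F := by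
  simp [Polynomial.C_dvd_iff_dvd_coeff, Polynomial.ext_iff, AdjoinRoot.mk_eq_zero]

theorem isOfFinOrder_of_aevalAeval_eq_zero {K : Type*} [Field K] [Finite K] [Algebra K A]
    {q : Polynomial K} (hq : Irreducible q) {a b : A} (ha : Polynomial.aeval a q = 0)
    (hb : IsUnit b) {F : Polynomial (Polynomial K)} (hF : ¬ Polynomial.C q ∣ F)
    (hroot : Polynomial.aevalAeval a b F = 0) : IsOfFinOrder b := by
  have : Fact (Irreducible q) := ⟨hq⟩
  have : Module.Finite K (AdjoinRoot q) := (AdjoinRoot.powerBasis hq.ne_zero).finite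
  have : Finite (AdjoinRoot q) := Module.finite_of_finite K
  let _ : Algebra (AdjoinRoot q) A :=
    (AdjoinRoot.liftAlgHom q (Algebra.ofId K A) a ha : AdjoinRoot q →+* A).toAlgebra
  have hcomp : (algebraMap (AdjoinRoot q) A).comp (AdjoinRoot.mk q) =
      (Polynomial.aeval a : Polynomial K →ₐ[K] A) := rfl
  refine isOfFinOrder_of_isUnit_of_isAlgebraic (AdjoinRoot q) hb
    ⟨F.map (AdjoinRoot.mk q), mt map_adjoinRoot_mk_eq_zero_iff.1 hF, ?_⟩
  rw [Polynomial.aeval_def, Polynomial.eval₂_map, hcomp, ← aevalAeval_eq_eval₂, hroot]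

end FiniteOrder

section PeriodGroup

variable {R G : Type*} [CommRing R] [AddCommGroup G]

theorem isUnit_single {m : G} {a : R} (ha : IsUnit a) : IsUnit (single m a : R[G]) := by
  obtain ⟨b, hb⟩ := ha.exists_right_inv
  refine .of_mul_eq_one (single (-m) b) ?_
  rw [single_mul_single, hb, add_neg_cancel, one_def]

/-- The group of all exponents `w` with `x^w ≡ 1` modulo `I`. For the annihilator ideal of a
configuration these are its periods, see `mem_periodGroup_annihilatorIdeal`. -/
def periodGroup (I : Ideal R[G]) : AddSubgroup G where
  carrier := {w | (single w 1 - 1 : R[G]) ∈ I}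
  zero_mem' := by simp [one_def]
  add_mem' {v w} hv hw := by
    have : (single (v + w) 1 - 1 : R[G]) =
        single v 1 * (single w 1 - 1) + (single v 1 - 1) := by
      rw [mul_sub, single_mul_single, mul_one, mul_one, sub_add_sub_cancel]
    change single (v + w) 1 - 1 ∈ I
    exact this ▸ I.add_mem (I.mul_mem_left _ hw) hv
  neg_mem' {w} hw := by
    have : (single (-w) 1 - 1 : R[G]) = -single (-w) 1 * (single w 1 - 1) := by
      rw [mul_sub, neg_mul, single_mul_single, neg_add_cancel, mul_one, mul_one, ← one_def]
      ring
    change single (-w) 1 - 1 ∈ I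
    exact this ▸ I.mul_mem_left _ hw

theorem mem_periodGroup {I : Ideal R[G]} {w : G} :
    w ∈ periodGroup I ↔ (single w 1 - 1 : R[G]) ∈ I := Iff.rfl

theorem periodGroup_mono {I J : Ideal R[G]} (h : I ≤ J) : periodGroup I ≤ periodGroup J :=
  fun _ hw => h hw

theorem mem_periodGroup_annihilatorIdeal {c : G → R} {w : G} :
    w ∈ periodGroup (annihilatorIdeal c) ↔ ∀ n, c (n + w) = c n := by
  simp only [mem_periodGroup, mem_annihilatorIdeal, funext_iff, map_sub, map_one,
    LinearMap.sub_apply, convolution_single, one_mul, Module.End.one_apply, sub_eq_zero]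
  exact (Equiv.subRight w).forall_congr fun n => by simp [eq_comm]

theorem nsmul_mem_periodGroup_mul (p : ℕ) [Fact p.Prime] [CharP R p] {I J : Ideal R[G]} {w : G}
    (hI : w ∈ periodGroup I) (hJ : w ∈ periodGroup J) : p • w ∈ periodGroup (I * J) := by
  have := charP_addMonoidAlgebra R G p
  have hpow : (single (p • w) 1 - 1 : R[G]) = (single w 1 - 1) ^ p := by
    rw [sub_pow_char, single_pow, one_pow, one_pow]
  rw [mem_periodGroup, hpow]
  refine Ideal.mem_of_dvd _ (pow_dvd_pow _ (Fact.out : p.Prime).two_le) ?_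
  rw [sq]
  exact Ideal.mul_mem_mul hI hJ

theorem exists_nsmul_mem_periodGroup {I : Ideal R[G]} {w : G}
    (h : IsOfFinOrder (Ideal.Quotient.mk I (single w 1))) :
    ∃ N : ℕ, N ≠ 0 ∧ N • w ∈ periodGroup I := by
  obtain ⟨N, hN, hpow⟩ := isOfFinOrder_iff_pow_eq_one.1 h
  refine ⟨N, hN.ne', ?_⟩
  rwa [mem_periodGroup, ← Ideal.Quotient.eq_zero_iff_mem, map_sub, map_one, sub_eq_zero,
    ← one_pow N, ← single_pow, map_pow]

end PeriodGroup

section TorsionMonomials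

variable {R G : Type*} [CommRing R] [AddCommGroup G]

/-- All monomials are roots of unity of a common order modulo `I`. -/
def HasTorsionMonomials (I : Ideal R[G]) : Prop :=
  ∃ N : ℕ, N ≠ 0 ∧ ∀ w : G, N • w ∈ periodGroup I

theorem HasTorsionMonomials.mono {I J : Ideal R[G]} (hI : HasTorsionMonomials I) (h : I ≤ J) :
    HasTorsionMonomials J :=
  let ⟨N, hN, hw⟩ := hI
  ⟨N, hN, fun w => periodGroup_mono h (hw w)⟩

theorem hasTorsionMonomials_of_isUnit_mem {I : Ideal R[G]} {g : R[G]} (hg : IsUnit g)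
    (hmem : g ∈ I) : HasTorsionMonomials I :=
  ⟨1, one_ne_zero, fun _ => mem_periodGroup.2 (I.eq_top_of_isUnit_mem hmem hg ▸ trivial)⟩

section PrimeCharacteristic

variable (p : ℕ) [Fact p.Prime] [CharP R p]
include p

theorem HasTorsionMonomials.mul {I J : Ideal R[G]} (hI : HasTorsionMonomials I)
    (hJ : HasTorsionMonomials J) : HasTorsionMonomials (I * J) := by
  obtain ⟨N, hN, hNI⟩ := hI
  obtain ⟨M, hM, hMJ⟩ := hJ
  refine ⟨p * (N * M), mul_ne_zero (Fact.out : p.Prime).ne_zero (mul_ne_zero hN hM), fun w => ?_⟩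
  rw [mul_smul]
  refine nsmul_mem_periodGroup_mul p ?_ ?_
  · exact mul_smul N M w ▸ hNI (M • w)
  · exact mul_comm M N ▸ mul_smul M N w ▸ hMJ (N • w)

theorem HasTorsionMonomials.span_pair_mul {f a b : R[G]}
    (ha : HasTorsionMonomials (Ideal.span {f, a})) (hb : HasTorsionMonomials (Ideal.span {f, b})) :
    HasTorsionMonomials (Ideal.span {f, a * b}) := by
  refine (ha.mul p hb).mono ?_
  rw [Ideal.span_pair_mul_span_pair, Ideal.span_le]
  have hf : f ∈ Ideal.span {f, a * b} := Ideal.subset_span (by simp)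
  rintro g (rfl | rfl | rfl | rfl)
  · exact Ideal.mul_mem_right _ _ hf
  · exact Ideal.mul_mem_right _ _ hf
  · exact Ideal.mul_mem_left _ _ hf
  · exact Ideal.subset_span (by simp)

theorem HasTorsionMonomials.span_pair_prod {ι : Type*} {f : R[G]} {s : Finset ι} {g : ι → R[G]}
    (h : ∀ i ∈ s, HasTorsionMonomials (Ideal.span {f, g i})) :
    HasTorsionMonomials (Ideal.span {f, ∏ i ∈ s, g i}) :=
  Finset.prod_induction g (fun a => HasTorsionMonomials (Ideal.span {f, a}))
    (fun _ _ => .span_pair_mul p)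
    (hasTorsionMonomials_of_isUnit_mem isUnit_one (Ideal.subset_span (by simp))) h

end PrimeCharacteristic

theorem hasTorsionMonomials_of_closure_pair_eq_top {I : Ideal R[G]} {v w : G}
    (hvw : AddSubgroup.closure {v, w} = ⊤)
    (hv : IsOfFinOrder (Ideal.Quotient.mk I (single v 1)))
    (hw : IsOfFinOrder (Ideal.Quotient.mk I (single w 1))) : HasTorsionMonomials I := by
  obtain ⟨N, hN, hNv⟩ := exists_nsmul_mem_periodGroup hv
  obtain ⟨M, hM, hMw⟩ := exists_nsmul_mem_periodGroup hw
  refine ⟨N * M, mul_ne_zero hN hM, fun u => ?_⟩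
  suffices AddSubgroup.closure {v, w} ≤ (periodGroup I).comap (nsmulAddMonoidHom (N * M)) from
    this (hvw ▸ AddSubgroup.mem_top u)
  rw [AddSubgroup.closure_le]
  rintro u (rfl | rfl)
  · change (N * M) • u ∈ periodGroup I
    rw [mul_comm, mul_smul]
    exact nsmul_mem hNv M
  · change (N * M) • u ∈ periodGroup I
    rw [mul_smul]
    exact nsmul_mem hMw N

theorem exists_aevalAeval_eq_single_mul {v w : G} (hvw : AddSubgroup.closure {v, w} = ⊤)
    (f : R[G]) : ∃ (n : ℕ) (F : Polynomial (Polynomial R)),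
      Polynomial.aevalAeval (single v 1) (single w 1) F = single (n • (v + w)) 1 * f := by
  have aevalAeval_monomial (i j : ℕ) (a : R) :
      Polynomial.aevalAeval (single v 1 : R[G]) (single w 1)
        (Polynomial.monomial j (Polynomial.monomial i a)) = single (i • v + j • w) a := by
    simp [Polynomial.aeval_monomial, single_pow, single_mul_single]
  induction f using AddMonoidAlgebra.induction_linear with
  | zero => exact ⟨0, 0, by simp⟩
  | add f g hf hg =>
    obtain ⟨n, F, hF⟩ := hf
    obtain ⟨m, G, hG⟩ := hg
    refine ⟨n + m, Polynomial.monomial m (Polynomial.monomial m 1) * F +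
      Polynomial.monomial n (Polynomial.monomial n 1) * G, ?_⟩
    rw [map_add, map_mul, map_mul, aevalAeval_monomial, aevalAeval_monomial, hF, hG, ← mul_assoc,
      ← mul_assoc, single_mul_single, single_mul_single, mul_one, ← smul_add, ← smul_add,
      ← add_smul, ← add_smul, add_comm m n, mul_add]
  | single u a =>
    obtain ⟨i, j, rfl⟩ := AddSubgroup.mem_closure_pair.1 (hvw ▸ AddSubgroup.mem_top u)
    refine ⟨i.natAbs + j.natAbs, Polynomial.monomial (i.natAbs + j.natAbs + j).toNat
      (Polynomial.monomial (i.natAbs + j.natAbs + i).toNat a), ?_⟩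
    rw [aevalAeval_monomial, single_mul_single, one_mul, ← natCast_zsmul v, ← natCast_zsmul w,
      ← natCast_zsmul (v + w), Int.toNat_of_nonneg (by omega), Int.toNat_of_nonneg (by omega)]
    congr 1
    push_cast
    module

theorem hasTorsionMonomials_of_irreducible {K : Type*} [Field K] [Finite K] {v w : G}
    (hvw : AddSubgroup.closure {v, w} = ⊤) {q : Polynomial K} (hq : Irreducible q)
    {f : K[G]} (hqf : ¬ Polynomial.aeval (single v 1) q ∣ f) :
    HasTorsionMonomials (Ideal.span {f, Polynomial.aeval (single v 1) q}) := by
  set I := Ideal.span {f, Polynomial.aeval (single v 1) q}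
  let π : K[G] →ₐ[K] K[G] ⧸ I := Ideal.Quotient.mkₐ K I
  have hπ_unit (u : G) : IsUnit (π (single u 1)) := (isUnit_single isUnit_one).map π
  have hv_root : Polynomial.aeval (π (single v 1)) q = 0 := by
    rw [Polynomial.aeval_algHom_apply]
    exact Ideal.Quotient.eq_zero_iff_mem.2 (Ideal.subset_span (by simp))
  obtain ⟨n, F, hF⟩ := exists_aevalAeval_eq_single_mul hvw f
  have hw_root : Polynomial.aevalAeval (π (single v 1)) (π (single w 1)) F = 0 := by
    rw [aevalAeval_algHom_apply, hF]
    exact Ideal.Quotient.eq_zero_iff_mem.2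
      (I.mul_mem_left _ (Ideal.subset_span (by simp)))
  have hqF : ¬ Polynomial.C q ∣ F := fun hdvd => hqf <| by
    have hmap := map_dvd (Polynomial.aevalAeval (single v 1 : K[G]) (single w 1)) hdvd
    rwa [hF, Polynomial.aevalAeval_C, (isUnit_single isUnit_one).dvd_mul_left] at hmap
  exact hasTorsionMonomials_of_closure_pair_eq_top hvw
    (isOfFinOrder_of_isUnit_of_isAlgebraic K (hπ_unit v) ⟨q, hq.ne_zero, hv_root⟩)
    (isOfFinOrder_of_aevalAeval_eq_zero hq hv_root (hπ_unit w) hqF hw_root)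

end TorsionMonomials

section LineFactors

/-- The existence of a line polynomial factor, in any direction. -/
def HasLineFactor {R : Type*} [CommRing R] (f : LP R) : Prop :=
  ∃ (g : LP R) (u : ℤ × ℤ), u ≠ 0 ∧ IsLinePoly u g ∧ g ∣ f

theorem aeval_single_one_eq_mapDomain {R G : Type*} [CommRing R] [AddCommGroup G] (v : G)
    (q : Polynomial R) :
    Polynomial.aeval (single v 1 : R[G]) q = mapDomain (fun i : ℕ => i • v) q.toFinsupp := by
  induction q using Polynomial.induction_on' with
  | add p q hp hq => rw [map_add, hp, hq, Polynomial.toFinsupp_add, mapDomain_add]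
  | monomial n a => simp [Polynomial.aeval_monomial, single_pow]

theorem support_coeff_aeval_single_one {R G : Type*} [CommRing R] [AddCommGroup G]
    [DecidableEq G] {v : G} (hv : ¬ IsOfFinAddOrder v) (q : Polynomial R) :
    (Polynomial.aeval (single v 1 : R[G]) q).coeff.support = q.support.image fun i => i • v := by
  rw [aeval_single_one_eq_mapDomain, coeff_mapDomain,
    Finsupp.mapDomain_support_of_injective (injective_nsmul_iff_not_isOfFinAddOrder.2 hv)]
  rfl

theorem isLinePoly_aeval {R : Type*} [CommRing R] {v : ℤ × ℤ} (hv : v ≠ 0) {q : Polynomial R}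
    (hq : 1 < q.support.card) : IsLinePoly v (Polynomial.aeval (single v 1 : LP R) q) := by
  classical
  have hv_order : ¬ IsOfFinAddOrder v := not_isOfFinAddOrder_of_isAddTorsionFree hv
  rw [IsLinePoly, support_coeff_aeval_single_one hv_order]
  constructor
  · rwa [Finset.card_image_of_injective _ (injective_nsmul_iff_not_isOfFinAddOrder.2 hv_order)]
  · refine ⟨0, Finset.forall_mem_image.2 fun i _ => ⟨i, ?_⟩⟩
    simp

theorem exists_closure_pair_eq_top {u : ℤ × ℤ} (hu : u ≠ 0) :
    ∃ (v w : ℤ × ℤ) (d : ℕ), AddSubgroup.closure {v, w} = ⊤ ∧ d • v = u := by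
  have hgcd : 0 < Int.gcd u.1 u.2 := Int.gcd_pos_iff.2 (by
    contrapose! hu
    exact Prod.ext hu.1 hu.2)
  obtain ⟨x, y, hxy, hx, hy⟩ := Int.exists_gcd_one hgcd
  obtain ⟨a, b, hab⟩ := Int.isCoprime_iff_gcd_eq_one.2 hxy
  refine ⟨(x, y), (-b, a), Int.gcd u.1 u.2, eq_top_iff.2 fun m _ => ?_, ?_⟩
  · refine AddSubgroup.mem_closure_pair.2 ⟨m.1 * a + m.2 * b, x * m.2 - y * m.1, ?_⟩
    ext
    · simp only [Prod.fst_add, Prod.smul_fst, smul_eq_mul]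
      linear_combination m.1 * hab
    · simp only [Prod.snd_add, Prod.smul_snd, smul_eq_mul]
      linear_combination m.2 * hab
  · ext
    · simpa [mul_comm] using hx.symm
    · simpa [mul_comm] using hy.symm

variable {K : Type*} [Field K] [Finite K] {f : LP K}

theorem hasTorsionMonomials_span_pair_aeval (hf : ¬ HasLineFactor f) {v w : ℤ × ℤ} (hv : v ≠ 0)
    (hvw : AddSubgroup.closure {v, w} = ⊤) {q : Polynomial K} (hq : q ≠ 0) :
    HasTorsionMonomials (Ideal.span {f, Polynomial.aeval (single v 1) q}) := by
  have of_isUnit {g : LP K} (hg : IsUnit g) : HasTorsionMonomials (Ideal.span {f, g}) :=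
    hasTorsionMonomials_of_isUnit_mem hg (Ideal.subset_span (by simp))
  obtain ⟨p, _⟩ := CharP.exists K
  have : Fact p.Prime := ⟨CharP.char_is_prime K p⟩
  induction q using WfDvdMonoid.induction_on_irreducible with
  | zero => exact absurd rfl hq
  | unit u hu => exact of_isUnit (hu.map _)
  | mul q i hq₀ hi ih =>
    rw [map_mul]
    refine .span_pair_mul p ?_ (ih hq₀)
    rcases le_or_gt i.support.card 1 with hcard | hcard
    · obtain ⟨n, a, rfl⟩ := Polynomial.card_support_le_one_iff_monomial.1 hcard
      have ha : a ≠ 0 := by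
        rintro rfl
        exact hi.ne_zero (Polynomial.monomial_zero_right n)
      refine of_isUnit ?_
      rw [Polynomial.aeval_monomial, single_pow, one_pow]
      exact (ha.isUnit.map _).mul (isUnit_single isUnit_one)
    · exact hasTorsionMonomials_of_irreducible hvw hi fun hdvd =>
        hf ⟨_, v, hv, isLinePoly_aeval hv hcard, hdvd⟩

theorem hasTorsionMonomials_span_pair_single_sub_one (hf : ¬ HasLineFactor f) {u : ℤ × ℤ}
    (hu : u ≠ 0) : HasTorsionMonomials (Ideal.span {f, single u 1 - 1}) := by
  obtain ⟨v, w, d, hvw, rfl⟩ := exists_closure_pair_eq_top hu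
  have hd : d ≠ 0 := by
    rintro rfl
    exact hu (zero_smul ℕ v)
  have hv : v ≠ 0 := by
    rintro rfl
    exact hu (smul_zero d)
  have hq : (Polynomial.X ^ d - 1 : Polynomial K) ≠ 0 :=
    (Polynomial.monic_X_pow_sub_C 1 hd).ne_zero
  simpa [single_pow] using hasTorsionMonomials_span_pair_aeval hf hv hvw hq

end LineFactors

theorem HasTorsionMonomials.twoPeriodic {R : Type*} [CommRing R] {c : ℤ × ℤ → R}
    (h : HasTorsionMonomials (annihilatorIdeal c)) : TwoPeriodic c := by
  obtain ⟨N, hN, hper⟩ := h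
  refine ⟨N • (1, 0), N • (0, 1), ⟨?_, mem_periodGroup_annihilatorIdeal.1 (hper _)⟩,
    ⟨?_, mem_periodGroup_annihilatorIdeal.1 (hper _)⟩, ?_⟩ <;> simp [hN]

theorem no_line_factors_two_periodic_general {K : Type*} [Field K] [Finite K] (f : LP K)
    (hline : ¬ HasLineFactor f) (c : ℤ × ℤ → ℤ) (hbdd : ∃ B, ∀ n, |c n| ≤ B)
    (hc : Annihilates f fun n => (c n : K)) (h : ∃ f' : LP ℤ, f' ≠ 0 ∧ Annihilates f' c) :
    TwoPeriodic fun n => (c n : K) := by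
  obtain ⟨B, hB⟩ := hbdd
  obtain ⟨f', hf'₀, hf'⟩ := h
  rw [annihilates_iff_mem_annihilatorIdeal] at hc hf'
  obtain ⟨s, hs, hprod⟩ := exists_prod_single_sub_one_mem_annihilatorIdeal hf'₀ hf' hB
  have hprodK : (∏ u ∈ s, (single u 1 - 1) : LP K) ∈ annihilatorIdeal fun n => (c n : K) := by
    simpa using mapRingHom_mem_annihilatorIdeal (Int.castRingHom K) hprod
  obtain ⟨p, _⟩ := CharP.exists K
  have : Fact p.Prime := ⟨CharP.char_is_prime K p⟩
  have htors : HasTorsionMonomials (Ideal.span {f, ∏ u ∈ s, (single u 1 - 1)}) :=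
    .span_pair_prod p fun u hu =>
      hasTorsionMonomials_span_pair_single_sub_one hline (ne_of_mem_of_not_mem hu hs)
  exact (htors.mono (Ideal.span_le.2 (Set.pair_subset hc hprodK))).twoPeriodic

/-- if f has no line polynomial factors and c ∈ X_f has a nonzero
annihilator over ℤ, then c is two-periodic. -/
theorem no_line_factors_two_periodic (p : ℕ) [Fact p.Prime] (f : LP (ZMod p))
    (hline : ¬ ∃ (g : LP (ZMod p)) (u : ℤ × ℤ), u ≠ 0 ∧ IsLinePoly u g ∧ g ∣ f)
    (c : ℤ × ℤ → ZMod p) (hc : Annihilates f c)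
    (h : ∃ f' : LP ℤ, f' ≠ 0 ∧ Annihilates f' (fun n => ((c n).val : ℤ))) :
    TwoPeriodic c := by
  have hbdd : ∃ B : ℤ, ∀ n, |((c n).val : ℤ)| ≤ B :=
    ⟨p, fun n => by rw [Nat.abs_cast]; exact_mod_cast (c n).val_lt.le⟩
  simpa using no_line_factors_two_periodic_general f hline _ hbdd (by simpa using hc) h
end
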